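/- For all q+1 ≤ j,k ≤ n, the fourth Wirtinger derivative of ψ in the z-variables satisfies ∂^4ψ/∂z̄_j∂z_j∂z̄_k∂z_k(0,0) = Σ_{t=1}^q [2i/(|λ_t|+|λ_j|+|λ_k|)^2 · (|λ_t|+|λ_j|+|λ_k| − |λ_j||λ_k|/(|λ_j|+|λ_t|) − |λ_j||λ_k|/(|λ_k|+|λ_t|))] |∂^3φ/∂z_t∂z̄_j∂z̄_k(0)|^2 + i ∂^4φ/∂z̄_j∂z_j∂z̄_k∂z_k(0), where all derivatives of ψ are taken in the z-variables (w held fixed) and evaluated at (z,w) = (0,0). -/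

import Mathlib

open Complex Asymptotics

attribute [local instance] Classical.propDecidable

noncomputable section

/-- `ℂⁿ` as `Fin n → ℂ`. -/
abbrev Cn (n : ℕ) := Fin n → ℂ

/-- Wirtinger derivative `∂/∂z_j = (1/2)(∂/∂x_{2j-1} − i ∂/∂x_{2j})`. -/
def wd {n : ℕ} (j : Fin n) (f : Cn n → ℂ) : Cn n → ℂ := fun z =>
  (1 / 2 : ℂ) *
    (fderiv ℝ f z (Pi.single j 1) - Complex.I * fderiv ℝ f z (Pi.single j Complex.I))

/-- Wirtinger derivative `∂/∂z̄_j = (1/2)(∂/∂x_{2j-1} + i ∂/∂x_{2j})`. -/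
def wdb {n : ℕ} (j : Fin n) (f : Cn n → ℂ) : Cn n → ℂ := fun z =>
  (1 / 2 : ℂ) *
    (fderiv ℝ f z (Pi.single j 1) + Complex.I * fderiv ℝ f z (Pi.single j Complex.I))

/-- A real-valued function regarded as complex-valued. -/
def cplx {n : ℕ} (φ : Cn n → ℝ) : Cn n → ℂ := fun z => (φ z : ℂ)

/-- `φ` is smooth and `φ(z) = Σ_j λ_j |z_j|² + O(|z|³)` as `z → 0`. -/
def PhiOK {n : ℕ} (lam : Fin n → ℝ) (φ : Cn n → ℝ) : Prop :=
  ContDiff ℝ (⊤ : ℕ∞) φ ∧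
    (fun z : Cn n => φ z - ∑ j, lam j * Complex.normSq (z j)) =O[nhds 0] fun z => ‖z‖ ^ 3

/-- The conditions (a)–(e) on the phase function `ψ`. -/
def Admissible {n : ℕ} (lam : Fin n → ℝ) (φ : Cn n → ℝ) (ψ : Cn n → Cn n → ℂ) : Prop :=
  ContDiff ℝ (⊤ : ℕ∞) (fun p : Cn n × Cn n => ψ p.1 p.2) ∧
  -- (a)
  (∀ z, ψ z z = 0) ∧
  (∀ z w, ψ z w = - (starRingEnd ℂ) (ψ w z)) ∧
  -- (b)
  (∃ c : ℝ, 0 < c ∧ ∀ z w, c * ‖z - w‖ ^ 2 ≤ (ψ z w).im) ∧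
  -- (c): on the diagonal, ∂ψ/∂z̄_j = i ∂φ/∂z̄_j, ∂ψ/∂z_j = −i ∂φ/∂z_j,
  --      ∂ψ/∂w̄_j = −i ∂φ/∂z̄_j, ∂ψ/∂w_j = i ∂φ/∂z_j
  (∀ (z : Cn n) (j : Fin n), wdb j (fun x => ψ x z) z = Complex.I * wdb j (cplx φ) z) ∧
  (∀ (z : Cn n) (j : Fin n), wd j (fun x => ψ x z) z = - Complex.I * wd j (cplx φ) z) ∧
  (∀ (z : Cn n) (j : Fin n), wdb j (fun w => ψ z w) z = - Complex.I * wdb j (cplx φ) z) ∧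
  (∀ (z : Cn n) (j : Fin n), wd j (fun w => ψ z w) z = Complex.I * wd j (cplx φ) z) ∧
  -- (d): Σ_j (i ∂ψ/∂z̄_j + ∂φ/∂z̄_j)(−i ∂ψ/∂z_j + ∂φ/∂z_j) vanishes to infinite
  --      order on the diagonal
  (∀ (m : ℕ) (z : Cn n),
    iteratedFDeriv ℝ m
      (fun p : Cn n × Cn n =>
        ∑ j, (Complex.I * wdb j (fun x => ψ x p.2) p.1 + wdb j (cplx φ) p.1) *
             (- Complex.I * wd j (fun x => ψ x p.2) p.1 + wd j (cplx φ) p.1))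
      (z, z) = 0) ∧
  -- (e)
  ((fun p : Cn n × Cn n =>
      ψ p.1 p.2 -
        (Complex.I * ∑ j, ((|lam j| * Complex.normSq (p.1 j - p.2 j) : ℝ) : ℂ)
          + Complex.I * ∑ j, ((lam j : ℝ) : ℂ) *
              ((starRingEnd ℂ) (p.1 j) * p.2 j - (starRingEnd ℂ) (p.2 j) * p.1 j)))
    =O[nhds 0] fun p => ‖p‖ ^ 3)

/-!
Put `u = φ(z) - iψ` and `v = φ(z) + iψ`, so that `u + v = 2φ(z)` and (d) is the eikonal equation
`∑ ∂̄_l v · ∂_l u = 0` to infinite order. The origin is a critical point of both factors, so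
differentiating the equation `k` times there gives a linear equation for the `k`-jets of `u` and `v`
in which each derivative only contributes its weight, an eigenvalue of the linearised equation:
`∂_m` has weights `λ_m - |λ_m|` and `0`, `∂̄_m` has weights `0` and `λ_m + |λ_m|`, and derivatives
along the diagonal `z = w` have weight zero. With `u + v = 2φ(z)` this determines every third
derivative of `v` with at least one factor of nonzero weight.

The fourth-order equation for `∂̄_j ∂_j ∂̄_k ∂_k` yields the fourth derivative of `ψ` up to six
quadratic terms in third derivatives, of which only `∑_t ∂_j ∂_k ∂̄_t v · ∂̄_j ∂̄_k ∂_t u` over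
`λ_t < 0` survives. In it `∂_j ∂_k ∂̄_t v` has weight zero and is not determined directly. By (a),
`v̄` is `φ(z) + iψ` with `z` and `w` exchanged in `ψ`, which turns it into a third `w`-derivative
of `v`; writing `∂_w = ∂_diag - ∂_z` reduces that to derivatives of nonzero weight and to the
derivative along the diagonal, where `v = φ`.
-/

section SmoothFunctions

open scoped ContDiff Topology ComplexConjugate

variable {E F : Type*} [NormedAddCommGroup E] [NormedSpace ℝ E]
  [NormedAddCommGroup F] [NormedSpace ℝ F]

theorem fderiv_eq_zero_of_isLittleO_sq {f : E → F} (h : f =o[𝓝 0] fun x => ‖x‖ ^ 2) :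
    fderiv ℝ f 0 = 0 := by
  have hf0 : f 0 = 0 := by simpa using h.isBigO.eq_zero_imp.self_of_nhds
  have h1 : f =o[𝓝 0] fun x => x :=
    (h.trans_isBigO (isBigO_refl _ _)).trans (isLittleO_norm_pow_id one_lt_two)
  exact (hasFDerivAt_iff_isLittleO_nhds_zero.2 (by simpa [hf0] using h1)).fderiv

theorem fderiv_fderiv_eq_zero_of_isLittleO_sq {f : E → F} (hf : ContDiff ℝ 2 f)
    (h : f =o[𝓝 0] fun x => ‖x‖ ^ 2) : fderiv ℝ (fderiv ℝ f) 0 = 0 := by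
  have h1 : ∀ x, HasFDerivAt f (fderiv ℝ f x) x :=
    fun x => (hf.differentiable (by simp) x).hasFDerivAt
  have h2 : HasFDerivAt (fderiv ℝ f) (fderiv ℝ (fderiv ℝ f) 0) 0 :=
    ((hf.fderiv_right (m := 1) (by norm_num)).differentiable (by simp) 0).hasFDerivAt
  ext v w
  have along (u : E) : (fun t : ℝ => f (0 + t • u)) =o[𝓝[>] 0] fun t => t ^ 2 := by
    have hu : Filter.Tendsto (fun t : ℝ => 0 + t • u) (𝓝[>] 0) (𝓝 0) :=
      (Continuous.tendsto' (by fun_prop) 0 0 (by simp)).mono_left nhdsWithin_le_nhds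
    refine (h.comp_tendsto hu).trans_isBigO (IsBigO.of_bound (‖u‖ ^ 2) (.of_forall fun t => ?_))
    simp [norm_smul, mul_pow, mul_comm]
  have hsq := convex_univ.isLittleO_alternate_sum_square (f := f) (v := v) (w := w)
    (fun x _ => h1 x) (Set.mem_univ 0) h2.hasFDerivWithinAt (by simp) (by simp)
  have hquot : (fun t : ℝ => t ^ 2 • fderiv ℝ (fderiv ℝ f) 0 v w) =o[𝓝[>] 0] fun t => t ^ 2 :=
    (((((along _).add (along _)).sub (along _)).sub (along _)).sub hsq).congr_left
      fun t => sub_sub_cancel _ _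
  have hconst : (fun _ : ℝ => fderiv ℝ (fderiv ℝ f) 0 v w) =o[𝓝[>] (0 : ℝ)] fun _ => (1 : ℝ) := by
    refine ((isBigO_refl (fun t : ℝ => (t ^ 2)⁻¹) _).smul_isLittleO hquot).congr' ?_ ?_ <;>
      filter_upwards [self_mem_nhdsWithin] with t (ht : 0 < t) <;> simp [smul_smul, ht.ne']
  simpa using isLittleO_const_const_iff.1 hconst

variable (E) in
/-- The `*`-algebra `C^∞(E, ℂ)` of complex-valued smooth functions on a real normed space. -/
def smoothFunctions : StarSubalgebra ℂ (E → ℂ) where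
  carrier := {f | ContDiff ℝ ∞ f}
  mul_mem' hf hg := by simp only [Set.mem_ofPred_eq] at *; exact hf.mul hg
  add_mem' hf hg := by simp only [Set.mem_ofPred_eq] at *; exact hf.add hg
  algebraMap_mem' _ := by simp only [Set.mem_ofPred_eq]; exact contDiff_const
  star_mem' hf := by
    simp only [Set.mem_ofPred_eq] at *
    exact (starL' ℝ : ℂ ≃L[ℝ] ℂ).contDiff.comp hf

theorem mem_smoothFunctions {f : E → ℂ} : f ∈ smoothFunctions E ↔ ContDiff ℝ ∞ f := by
  change f ∈ {f | ContDiff ℝ ∞ f} ↔ _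
  simp only [Set.mem_ofPred_eq]

theorem contDiff_smoothFunctions (f : smoothFunctions E) : ContDiff ℝ ∞ (f : E → ℂ) :=
  mem_smoothFunctions.1 f.2

theorem contDiff_smoothFunctions_nat (f : smoothFunctions E) (m : ℕ) :
    ContDiff ℝ m (f : E → ℂ) :=
  contDiff_infty.1 (contDiff_smoothFunctions f) m

theorem differentiable_smoothFunctions (f : smoothFunctions E) : Differentiable ℝ (f : E → ℂ) :=
  (contDiff_smoothFunctions f).differentiable (by simp)

/-- The derivation `f ↦ Df(·) v` of the algebra of smooth functions. -/
def dirDeriv (v : E) : Derivation ℂ (smoothFunctions E) (smoothFunctions E) :=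
  Derivation.mk'
    { toFun := fun f => ⟨fun x => fderiv ℝ f x v, mem_smoothFunctions.2 <|
        ((contDiff_smoothFunctions f).fderiv_right (by simp)).clm_apply contDiff_const⟩
      map_add' := fun f g => by
        ext x
        simp [fderiv_add (differentiable_smoothFunctions f x) (differentiable_smoothFunctions g x)]
      map_smul' := fun c f => by
        ext x
        simp [fderiv_const_smul (differentiable_smoothFunctions f x)] }
    fun f g => by
      ext x
      simp [fderiv_mul (differentiable_smoothFunctions f x) (differentiable_smoothFunctions g x)]

@[simp]
theorem dirDeriv_apply (v : E) (f : smoothFunctions E) (x : E) :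
    (dirDeriv v f : E → ℂ) x = fderiv ℝ f x v := rfl

theorem dirDeriv_add (v w : E) : dirDeriv (v + w) = dirDeriv v + dirDeriv w := by
  ext f x
  simp

theorem dirDeriv_neg (v : E) : dirDeriv (-v) = -dirDeriv v := by
  ext f x
  simp

theorem dirDeriv_dirDeriv_apply (v w : E) (f : smoothFunctions E) (x : E) :
    (dirDeriv v (dirDeriv w f) : E → ℂ) x = fderiv ℝ (fderiv ℝ (f : E → ℂ)) x v w := by
  have hf := (contDiff_smoothFunctions f).fderiv_right (m := ∞) (by simp)
  change fderiv ℝ (fun y => fderiv ℝ (f : E → ℂ) y w) x v = _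
  rw [fderiv_clm_apply (hf.differentiable (by simp) x) (differentiableAt_const w)]
  simp

theorem dirDeriv_comm (v w : E) (f : smoothFunctions E) :
    dirDeriv v (dirDeriv w f) = dirDeriv w (dirDeriv v f) := by
  ext x
  rw [dirDeriv_dirDeriv_apply, dirDeriv_dirDeriv_apply]
  exact ((contDiff_smoothFunctions_nat f 2).contDiffAt).isSymmSndFDerivAt (by simp) v w

theorem star_dirDeriv (v : E) (f : smoothFunctions E) :
    star (dirDeriv v f) = dirDeriv v (star f) := by
  ext x
  change star (fderiv ℝ (f : E → ℂ) x v) = fderiv ℝ (fun y => star ((f : E → ℂ) y)) x v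
  rw [fderiv_star]
  rfl

/-- Evaluation at `x`, as a character of the algebra of smooth functions. -/
def evalAt (x : E) : smoothFunctions E →ₐ[ℂ] ℂ :=
  (Pi.evalAlgHom ℂ (fun _ : E => ℂ) x).comp (smoothFunctions E).toSubalgebra.val

@[simp]
theorem evalAt_apply (x : E) (f : smoothFunctions E) : evalAt x f = (f : E → ℂ) x := rfl

theorem evalAt_star (x : E) (f : smoothFunctions E) : evalAt x (star f) = conj (evalAt x f) := rfl

/-- Precomposition with a continuous linear map. -/
def pullback (T : E →L[ℝ] F) : smoothFunctions F →⋆ₐ[ℂ] smoothFunctions E where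
  toFun f := ⟨f ∘ T, mem_smoothFunctions.2 ((contDiff_smoothFunctions f).comp T.contDiff)⟩
  map_one' := rfl
  map_mul' _ _ := rfl
  map_zero' := rfl
  map_add' _ _ := rfl
  commutes' _ := rfl
  map_star' _ := rfl

theorem evalAt_zero_pullback (T : E →L[ℝ] F) (f : smoothFunctions F) :
    evalAt 0 (pullback T f) = evalAt 0 f :=
  congr_arg (f : F → ℂ) T.map_zero

theorem dirDeriv_pullback (T : E →L[ℝ] F) (v : E) (f : smoothFunctions F) :
    dirDeriv v (pullback T f) = pullback T (dirDeriv (T v) f) := by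
  ext x
  change fderiv ℝ ((f : F → ℂ) ∘ T) x v = fderiv ℝ (f : F → ℂ) (T x) (T v)
  rw [fderiv_comp x (differentiable_smoothFunctions f _) T.differentiableAt, T.fderiv]
  rfl

theorem evalAt_dirDeriv_eq_zero {f : smoothFunctions E} (h : (f : E → ℂ) =o[𝓝 0] fun x => ‖x‖ ^ 2)
    (v : E) : evalAt 0 (dirDeriv v f) = 0 := by
  simp [fderiv_eq_zero_of_isLittleO_sq h]

theorem evalAt_dirDeriv_dirDeriv_eq_zero {f : smoothFunctions E}
    (h : (f : E → ℂ) =o[𝓝 0] fun x => ‖x‖ ^ 2) (v w : E) :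
    evalAt 0 (dirDeriv v (dirDeriv w f)) = 0 := by
  rw [evalAt_apply, dirDeriv_dirDeriv_apply, fderiv_fderiv_eq_zero_of_isLittleO_sq
    (contDiff_smoothFunctions_nat f 2) h]
  rfl

/-- The smooth functions all of whose derivatives vanish at `x`. -/
def flatAt (x : E) : Submodule ℂ (smoothFunctions E) where
  carrier := {f | ∀ m, iteratedFDeriv ℝ m (f : E → ℂ) x = 0}
  add_mem' {f g} hf hg := by
    simp only [Set.mem_ofPred_eq] at *
    intro m
    change iteratedFDeriv ℝ m ((f : E → ℂ) + (g : E → ℂ)) x = 0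
    rw [iteratedFDeriv_add_apply (contDiff_smoothFunctions_nat f m).contDiffAt
      (contDiff_smoothFunctions_nat g m).contDiffAt, hf, hg, add_zero]
  zero_mem' := by
    simp only [Set.mem_ofPred_eq]
    intro m
    exact congr_fun (iteratedFDeriv_fun_zero (𝕜 := ℝ)) x
  smul_mem' c f hf := by
    simp only [Set.mem_ofPred_eq] at *
    intro m
    change iteratedFDeriv ℝ m (c • (f : E → ℂ)) x = 0
    rw [iteratedFDeriv_const_smul_apply (contDiff_smoothFunctions_nat f m).contDiffAt, hf,
      smul_zero]

theorem mem_flatAt {x : E} {f : smoothFunctions E} :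
    f ∈ flatAt x ↔ ∀ m, iteratedFDeriv ℝ m (f : E → ℂ) x = 0 := by
  change f ∈ {f : smoothFunctions E | ∀ m, iteratedFDeriv ℝ m (f : E → ℂ) x = 0} ↔ _
  simp only [Set.mem_ofPred_eq]

theorem dirDeriv_mem_flatAt {x : E} {f : smoothFunctions E} (hf : f ∈ flatAt x) (v : E) :
    dirDeriv v f ∈ flatAt x := by
  rw [mem_flatAt] at hf ⊢
  intro m
  have hfd : ContDiffAt ℝ m (fderiv ℝ (f : E → ℂ)) x :=
    ((contDiff_smoothFunctions f).fderiv_right (m := m) (by exact_mod_cast le_top)).contDiffAt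
  have hzero : iteratedFDeriv ℝ m (fderiv ℝ (f : E → ℂ)) x = 0 :=
    norm_eq_zero.1 (by rw [norm_iteratedFDeriv_fderiv, hf, norm_zero])
  change iteratedFDeriv ℝ m (ContinuousLinearMap.apply ℝ ℂ v ∘ fderiv ℝ (f : E → ℂ)) x = 0
  rw [ContinuousLinearMap.iteratedFDeriv_comp_left _ hfd le_rfl, hzero]
  ext
  simp

theorem evalAt_eq_zero_of_mem_flatAt {x : E} {f : smoothFunctions E} (hf : f ∈ flatAt x) :
    evalAt x f = 0 := by
  simpa using congr_arg (fun L => L 0) (mem_flatAt.1 hf 0)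

end SmoothFunctions

section Wirtinger

open scoped Topology ComplexConjugate

variable {E F : Type*} [NormedAddCommGroup E] [NormedSpace ℝ E] [Module ℂ E]
  [NormedAddCommGroup F] [NormedSpace ℝ F] [Module ℂ F]

/-- The Wirtinger derivative along a vector `c = (a, b)` of the complexified tangent space, written
as `E^{1,0} ⊕ E^{0,1}` with both summands identified with `E`: it is `∂_a + ∂̄_b`. -/
def wirtinger (c : E × E) : Derivation ℂ (smoothFunctions E) (smoothFunctions E) :=
  (1 / 2 : ℂ) • (dirDeriv (c.1 + c.2) - I • dirDeriv (I • (c.1 - c.2)))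

theorem wirtinger_apply (c : E × E) (f : smoothFunctions E) :
    wirtinger c f =
      (1 / 2 : ℂ) • (dirDeriv (c.1 + c.2) f - I • dirDeriv (I • (c.1 - c.2)) f) := rfl

theorem wirtinger_add (c d : E × E) : wirtinger (c + d) = wirtinger c + wirtinger d := by
  have hsum : (c + d).1 + (c + d).2 = (c.1 + c.2) + (d.1 + d.2) := add_add_add_comm _ _ _ _
  have hdiff : I • ((c + d).1 - (c + d).2) = I • (c.1 - c.2) + I • (d.1 - d.2) := by
    rw [← smul_add, Prod.fst_add, Prod.snd_add, add_sub_add_comm]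
  simp only [wirtinger, hsum, hdiff, dirDeriv_add]
  module

theorem wirtinger_comm (c d : E × E) (f : smoothFunctions E) :
    wirtinger c (wirtinger d f) = wirtinger d (wirtinger c f) := by
  simp only [wirtinger_apply, map_sub, Derivation.map_smul]
  rw [dirDeriv_comm (c.1 + c.2) (d.1 + d.2), dirDeriv_comm (c.1 + c.2) (I • (d.1 - d.2)),
    dirDeriv_comm (I • (c.1 - c.2)) (d.1 + d.2), dirDeriv_comm (I • (c.1 - c.2)) (I • (d.1 - d.2))]
  module

theorem star_wirtinger (c : E × E) (f : smoothFunctions E) :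
    star (wirtinger c f) = wirtinger c.swap (star f) := by
  have hdir : dirDeriv (I • (c.2 - c.1)) (star f) = -dirDeriv (I • (c.1 - c.2)) (star f) := by
    rw [← neg_sub c.1 c.2, smul_neg, dirDeriv_neg, Derivation.neg_apply]
  simp only [wirtinger_apply, star_smul, star_sub, star_dirDeriv, Prod.fst_swap, Prod.snd_swap,
    hdir, add_comm c.2 c.1]
  simp

theorem wirtinger_mem_flatAt {x : E} {f : smoothFunctions E} (hf : f ∈ flatAt x) (c : E × E) :
    wirtinger c f ∈ flatAt x :=
  (flatAt x).smul_mem _ <| (flatAt x).sub_mem (dirDeriv_mem_flatAt hf _) <|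
    (flatAt x).smul_mem _ (dirDeriv_mem_flatAt hf _)

theorem evalAt_wirtinger_eq_zero {f : smoothFunctions E}
    (h : (f : E → ℂ) =o[𝓝 0] fun x => ‖x‖ ^ 2) (c : E × E) : evalAt 0 (wirtinger c f) = 0 := by
  simp only [wirtinger_apply, map_sub, map_smul, evalAt_dirDeriv_eq_zero h, smul_zero, sub_zero]

theorem evalAt_wirtinger_wirtinger_eq_zero {f : smoothFunctions E}
    (h : (f : E → ℂ) =o[𝓝 0] fun x => ‖x‖ ^ 2) (c d : E × E) :
    evalAt 0 (wirtinger c (wirtinger d f)) = 0 := by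
  simp only [wirtinger_apply, map_sub, Derivation.map_smul, map_smul,
    evalAt_dirDeriv_dirDeriv_eq_zero h, smul_zero, sub_zero]

theorem wirtinger_pullback (T : E →L[ℝ] F) (hT : ∀ v, T (I • v) = I • T v) (c : E × E)
    (f : smoothFunctions F) :
    wirtinger c (pullback T f) = pullback T (wirtinger (c.map T T) f) := by
  simp only [wirtinger_apply, dirDeriv_pullback, map_smul, map_sub, map_add, hT, Prod.map_fst,
    Prod.map_snd]

variable [IsScalarTower ℝ ℂ E]

/-- A complex-linear functional, as a smooth function. -/
def ofFunctional (L : E →L[ℂ] ℂ) : smoothFunctions E :=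
  ⟨L, mem_smoothFunctions.2 (L.restrictScalars ℝ).contDiff⟩

theorem wirtinger_ofFunctional (L : E →L[ℂ] ℂ) (c : E × E) :
    wirtinger c (ofFunctional L) = algebraMap ℂ _ (L c.1) := by
  have hdir (v : E) : dirDeriv v (ofFunctional L) = algebraMap ℂ _ (L v) := by
    ext x
    exact congr_arg (fun D => D v) (L.restrictScalars ℝ).fderiv
  have hI : L (c.1 + c.2) - I * L (I • (c.1 - c.2)) = 2 * L c.1 := by
    simp only [map_add, map_sub, map_smul, smul_eq_mul]
    linear_combination (-(L c.1 - L c.2)) * I_mul_I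
  rw [wirtinger_apply, hdir, hdir, Algebra.smul_def, Algebra.smul_def, ← map_mul, ← map_sub,
    ← map_mul, hI, ← mul_assoc, one_div_mul_cancel two_ne_zero, one_mul]

theorem wirtinger_star_ofFunctional (L : E →L[ℂ] ℂ) (c : E × E) :
    wirtinger c (star (ofFunctional L)) = algebraMap ℂ _ (conj (L c.2)) := by
  rw [← Prod.swap_swap c, ← star_wirtinger, wirtinger_ofFunctional, ← algebraMap_star_comm]
  rfl

end Wirtinger

section Leibniz

variable {R S : Type*} [CommRing R] [CommRing S] [Algebra R S] (ev : S →ₐ[R] R)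
  (D₁ D₂ D₃ D₄ : Derivation R S S) {f g : S}

theorem eval_leibniz_three (hf : ev f = 0) (hg : ev g = 0) :
    ev (D₁ (D₂ (D₃ (f * g)))) =
      ev (D₁ f) * ev (D₂ (D₃ g)) + ev (D₂ f) * ev (D₁ (D₃ g)) + ev (D₃ f) * ev (D₁ (D₂ g)) +
      (ev (D₂ (D₃ f)) * ev (D₁ g) + ev (D₁ (D₃ f)) * ev (D₂ g) + ev (D₁ (D₂ f)) * ev (D₃ g)) := by
  simp only [Derivation.leibniz, smul_eq_mul, map_add, map_mul, hf, hg]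
  ring

theorem eval_leibniz_four (hf : ev f = 0) (hg : ev g = 0) :
    ev (D₁ (D₂ (D₃ (D₄ (f * g))))) =
      ev (D₁ f) * ev (D₂ (D₃ (D₄ g))) + ev (D₂ f) * ev (D₁ (D₃ (D₄ g))) +
        ev (D₃ f) * ev (D₁ (D₂ (D₄ g))) + ev (D₄ f) * ev (D₁ (D₂ (D₃ g))) +
      (ev (D₂ (D₃ (D₄ f))) * ev (D₁ g) + ev (D₁ (D₃ (D₄ f))) * ev (D₂ g) +
        ev (D₁ (D₂ (D₄ f))) * ev (D₃ g) + ev (D₁ (D₂ (D₃ f))) * ev (D₄ g)) +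
      (ev (D₁ (D₂ f)) * ev (D₃ (D₄ g)) + ev (D₃ (D₄ f)) * ev (D₁ (D₂ g)) +
        ev (D₁ (D₃ f)) * ev (D₂ (D₄ g)) + ev (D₂ (D₄ f)) * ev (D₁ (D₃ g)) +
        ev (D₁ (D₄ f)) * ev (D₂ (D₃ g)) + ev (D₂ (D₃ f)) * ev (D₁ (D₄ g))) := by
  simp only [Derivation.leibniz, smul_eq_mul, map_add, map_mul, hf, hg]
  ring

end Leibniz

section Eikonal

variable {E : Type*} [NormedAddCommGroup E] [NormedSpace ℝ E] [Module ℂ E]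
  {ι : Type*} [Fintype ι]

/-- The eikonal expression `∑ ∂̄_l v · ∂_l u`, where `∂_l` and `∂̄_l` are the Wirtinger derivatives
along `d l` and `db l`. -/
def eikonal (d db : ι → E × E) (u v : smoothFunctions E) : smoothFunctions E :=
  ∑ l, wirtinger (db l) v * wirtinger (d l) u

variable {d db : ι → E × E} {w u v : smoothFunctions E} {x : E}

variable (d db u v x) in
/-- At a critical point `x` of `u` and `v` the vector fields `∑ ∂̄_l v · ∂_l` and `∑ ∂_l u · ∂̄_l`
vanish, so their linear parts act on the tangent vectors at `x`. This says that `c` is an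
eigenvector of both, with eigenvalues `p` and `r`. -/
structure HasWeights (c : E × E) (p r : ℂ) : Prop where
  left : ∀ g, ∑ l, evalAt x (wirtinger c (wirtinger (db l) v)) * evalAt x (wirtinger (d l) g) =
    p * evalAt x (wirtinger c g)
  right : ∀ g, ∑ l, evalAt x (wirtinger (db l) g) * evalAt x (wirtinger c (wirtinger (d l) u)) =
    r * evalAt x (wirtinger c g)

namespace HasWeights

variable {c : E × E} {p r : ℂ} (h : HasWeights d db u v x c p r) (a b e : E × E)
  (g : smoothFunctions E)

include h

theorem left_two :
    ∑ l, evalAt x (wirtinger c (wirtinger (db l) v)) *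
        evalAt x (wirtinger a (wirtinger b (wirtinger (d l) g))) =
      p * evalAt x (wirtinger c (wirtinger a (wirtinger b g))) := by
  simpa only [wirtinger_comm _ (d _)] using h.left (wirtinger a (wirtinger b g))

theorem right_two :
    ∑ l, evalAt x (wirtinger a (wirtinger b (wirtinger (db l) g))) *
        evalAt x (wirtinger c (wirtinger (d l) u)) =
      r * evalAt x (wirtinger c (wirtinger a (wirtinger b g))) := by
  simpa only [wirtinger_comm _ (db _)] using h.right (wirtinger a (wirtinger b g))

theorem left_three :
    ∑ l, evalAt x (wirtinger c (wirtinger (db l) v)) *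
        evalAt x (wirtinger a (wirtinger b (wirtinger e (wirtinger (d l) g)))) =
      p * evalAt x (wirtinger c (wirtinger a (wirtinger b (wirtinger e g)))) := by
  simpa only [wirtinger_comm _ (d _)] using h.left (wirtinger a (wirtinger b (wirtinger e g)))

theorem right_three :
    ∑ l, evalAt x (wirtinger a (wirtinger b (wirtinger e (wirtinger (db l) g)))) *
        evalAt x (wirtinger c (wirtinger (d l) u)) =
      r * evalAt x (wirtinger c (wirtinger a (wirtinger b (wirtinger e g)))) := by
  simpa only [wirtinger_comm _ (db _)] using h.right (wirtinger a (wirtinger b (wirtinger e g)))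

end HasWeights

variable (d db u v x) in
/-- The bilinear contraction `∑ ∂_a ∂_b ∂̄_l v · ∂_c ∂_e ∂_l u` at `x` of third-order jets, by which
the fourth-order part of the eikonal equation couples to lower orders. -/
def jetPairing (a b c e : E × E) : ℂ :=
  ∑ l, evalAt x (wirtinger a (wirtinger b (wirtinger (db l) v))) *
    evalAt x (wirtinger c (wirtinger e (wirtinger (d l) u)))

variable (hv : ∀ l, evalAt x (wirtinger (db l) v) = 0)
  (hu : ∀ l, evalAt x (wirtinger (d l) u) = 0)
  {a b c e : E × E} {pa pb pc pe ra rb rc re : ℂ}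

include hv hu

theorem evalAt_eikonal_three (ha : HasWeights d db u v x a pa ra)
    (hb : HasWeights d db u v x b pb rb) (hc : HasWeights d db u v x c pc rc) :
    evalAt x (wirtinger a (wirtinger b (wirtinger c (eikonal d db u v)))) =
      (pa + pb + pc) * evalAt x (wirtinger a (wirtinger b (wirtinger c u))) +
      (ra + rb + rc) * evalAt x (wirtinger a (wirtinger b (wirtinger c v))) := by
  simp only [eikonal, map_sum, eval_leibniz_three _ _ _ _ (hv _) (hu _), Finset.sum_add_distrib,
    ha.left_two, hb.left_two, hc.left_two, ha.right_two, hb.right_two, hc.right_two]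
  rw [wirtinger_comm b a, wirtinger_comm b a, wirtinger_comm c a, wirtinger_comm c a,
    wirtinger_comm c b, wirtinger_comm c b]
  ring

theorem evalAt_eikonal_four (ha : HasWeights d db u v x a pa ra)
    (hb : HasWeights d db u v x b pb rb) (hc : HasWeights d db u v x c pc rc)
    (he : HasWeights d db u v x e pe re) :
    evalAt x (wirtinger a (wirtinger b (wirtinger c (wirtinger e (eikonal d db u v))))) =
      (pa + pb + pc + pe) *
        evalAt x (wirtinger a (wirtinger b (wirtinger c (wirtinger e u)))) +
      (ra + rb + rc + re) *
        evalAt x (wirtinger a (wirtinger b (wirtinger c (wirtinger e v)))) +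
      (jetPairing d db u v x a b c e + jetPairing d db u v x c e a b +
        jetPairing d db u v x a c b e + jetPairing d db u v x b e a c +
        jetPairing d db u v x a e b c + jetPairing d db u v x b c a e) := by
  simp only [eikonal, jetPairing, map_sum, eval_leibniz_four _ _ _ _ _ (hv _) (hu _),
    Finset.sum_add_distrib, ha.left_three, hb.left_three, hc.left_three, he.left_three,
    ha.right_three, hb.right_three, hc.right_three, he.right_three]
  simp only [wirtinger_comm b a, wirtinger_comm c a, wirtinger_comm e a, wirtinger_comm c b,
    wirtinger_comm e b, wirtinger_comm e c]
  ring

omit hv hu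

variable (d db w u v x) in
/-- A splitting `2 w = u + v` that solves the eikonal equation `∑ ∂̄_l v · ∂_l u = 0` to infinite
order at the point `x`, where both factors of every summand vanish. -/
structure IsEikonalPair : Prop where
  add_eq : u + v = (2 : ℂ) • w
  critical_left : ∀ l, evalAt x (wirtinger (db l) v) = 0
  critical_right : ∀ l, evalAt x (wirtinger (d l) u) = 0
  flat : eikonal d db u v ∈ flatAt x

namespace IsEikonalPair

variable (h : IsEikonalPair d db w u v x)

include h

theorem evalAt_three_add :
    evalAt x (wirtinger a (wirtinger b (wirtinger c u))) +
        evalAt x (wirtinger a (wirtinger b (wirtinger c v))) =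
      2 * evalAt x (wirtinger a (wirtinger b (wirtinger c w))) := by
  simp only [← map_add, h.add_eq, Derivation.map_smul, map_smul, smul_eq_mul]

variable (ha : HasWeights d db u v x a pa ra) (hb : HasWeights d db u v x b pb rb)
  (hc : HasWeights d db u v x c pc rc) (he : HasWeights d db u v x e pe re)

include ha hb hc

theorem left_three_eq :
    (pa + pb + pc - (ra + rb + rc)) * evalAt x (wirtinger a (wirtinger b (wirtinger c v))) =
      2 * (pa + pb + pc) * evalAt x (wirtinger a (wirtinger b (wirtinger c w))) := by
  have heik := evalAt_eikonal_three h.critical_left h.critical_right ha hb hc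
  rw [evalAt_eq_zero_of_mem_flatAt (wirtinger_mem_flatAt (wirtinger_mem_flatAt
    (wirtinger_mem_flatAt h.flat c) b) a)] at heik
  linear_combination (pa + pb + pc) * h.evalAt_three_add (a := a) (b := b) (c := c) + heik

theorem right_three_eq :
    (ra + rb + rc - (pa + pb + pc)) * evalAt x (wirtinger a (wirtinger b (wirtinger c u))) =
      2 * (ra + rb + rc) * evalAt x (wirtinger a (wirtinger b (wirtinger c w))) := by
  linear_combination (ra + rb + rc - (pa + pb + pc)) *
    h.evalAt_three_add (a := a) (b := b) (c := c) + h.left_three_eq ha hb hc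

include he

theorem four_eq :
    (pa + pb + pc + pe) *
        evalAt x (wirtinger a (wirtinger b (wirtinger c (wirtinger e u)))) +
      (ra + rb + rc + re) *
        evalAt x (wirtinger a (wirtinger b (wirtinger c (wirtinger e v)))) +
      (jetPairing d db u v x a b c e + jetPairing d db u v x c e a b +
        jetPairing d db u v x a c b e + jetPairing d db u v x b e a c +
        jetPairing d db u v x a e b c + jetPairing d db u v x b c a e) = 0 := by
  rw [← evalAt_eikonal_four h.critical_left h.critical_right ha hb hc he]
  exact evalAt_eq_zero_of_mem_flatAt (wirtinger_mem_flatAt (wirtinger_mem_flatAt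
    (wirtinger_mem_flatAt (wirtinger_mem_flatAt h.flat e) c) b) a)

end IsEikonalPair

end Eikonal

section Pairs

variable {E : Type*} [NormedAddCommGroup E] [NormedSpace ℝ E] [Module ℂ E]

/-- A complexified tangent vector acting in the first variable `z` of `(z, w)`. -/
def zDir (c : E × E) : (E × E) × (E × E) := ((c.1, 0), (c.2, 0))

/-- A complexified tangent vector acting in the second variable `w` of `(z, w)`. -/
def wDir (c : E × E) : (E × E) × (E × E) := ((0, c.1), (0, c.2))

/-- A complexified tangent vector acting in both variables of `(z, w)` at once, hence tangent to the
diagonal `z = w`. -/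
def diagDir (c : E × E) : (E × E) × (E × E) := ((c.1, c.1), (c.2, c.2))

variable (E) in
/-- The exchange of variables `(z, w) ↦ (w, z)`. -/
def swapMap : E × E →L[ℝ] E × E := (ContinuousLinearMap.snd ℝ E E).prod (.fst ℝ E E)

variable (E) in
/-- The diagonal embedding `z ↦ (z, z)`. -/
def diagMap : E →L[ℝ] E × E := (ContinuousLinearMap.id ℝ E).prod (.id ℝ E)

variable (c : E × E)

theorem wirtinger_wDir : wirtinger (wDir c) = wirtinger (diagDir c) - wirtinger (zDir c) := by
  ext f : 1
  have hadd : diagDir c = zDir c + wDir c := by simp [zDir, wDir, diagDir]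
  rw [Derivation.sub_apply, hadd, wirtinger_add, Derivation.add_apply, add_sub_cancel_left]

theorem wirtinger_zDir_pullback_fst (f : smoothFunctions E) :
    wirtinger (zDir c) (pullback (.fst ℝ E E) f) = pullback (.fst ℝ E E) (wirtinger c f) :=
  wirtinger_pullback _ (fun _ => rfl) _ _

theorem wirtinger_diagDir_pullback_fst (f : smoothFunctions E) :
    wirtinger (diagDir c) (pullback (.fst ℝ E E) f) = pullback (.fst ℝ E E) (wirtinger c f) :=
  wirtinger_pullback _ (fun _ => rfl) _ _

theorem wirtinger_wDir_pullback_fst (f : smoothFunctions E) :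
    wirtinger (wDir c) (pullback (.fst ℝ E E) f) = 0 := by
  rw [wirtinger_wDir, Derivation.sub_apply, wirtinger_zDir_pullback_fst,
    wirtinger_diagDir_pullback_fst, sub_self]

theorem wirtinger_zDir_pullback_swapMap (f : smoothFunctions (E × E)) :
    wirtinger (zDir c) (pullback (swapMap E) f) = pullback (swapMap E) (wirtinger (wDir c) f) :=
  wirtinger_pullback _ (fun _ => rfl) _ _

theorem wirtinger_pullback_diagMap (f : smoothFunctions (E × E)) :
    wirtinger c (pullback (diagMap E) f) = pullback (diagMap E) (wirtinger (diagDir c) f) :=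
  wirtinger_pullback _ (fun _ => rfl) _ _

theorem wirtinger_zDir_apply (f : smoothFunctions (E × E)) (z w : E) :
    (wirtinger (zDir c) f : E × E → ℂ) (z, w) =
      1 / 2 * (fderiv ℝ (fun x => (f : E × E → ℂ) (x, w)) z (c.1 + c.2) -
        I * fderiv ℝ (fun x => (f : E × E → ℂ) (x, w)) z (I • (c.1 - c.2))) := by
  have hslice (v : E) : fderiv ℝ (fun x => (f : E × E → ℂ) (x, w)) z v =
      fderiv ℝ (f : E × E → ℂ) (z, w) (v, 0) := by
    have h := HasFDerivAt.comp (f := fun x => (x, w)) z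
      (differentiable_smoothFunctions f (z, w)).hasFDerivAt (hasFDerivAt_prodMk_left z w)
    exact congr_arg (fun L => L v) h.fderiv
  rw [hslice, hslice, wirtinger_apply]
  simp [zDir]

end Pairs

section Coordinates

variable {n : ℕ} (l : Fin n)

/-- The coordinate vector field `∂/∂z_l`, as a complexified tangent vector. -/
def hol : Cn n × Cn n := (Pi.single l 1, 0)

/-- The coordinate vector field `∂/∂z̄_l`, as a complexified tangent vector. -/
def antihol : Cn n × Cn n := (0, Pi.single l 1)

/-- The coordinate vector field `∂/∂z_l` in the first variable of `(z, w)`. -/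
abbrev dz : (Cn n × Cn n) × (Cn n × Cn n) := zDir (hol l)

/-- The coordinate vector field `∂/∂z̄_l` in the first variable of `(z, w)`. -/
abbrev dzbar : (Cn n × Cn n) × (Cn n × Cn n) := zDir (antihol l)

theorem wd_coe (f : smoothFunctions (Cn n)) : wd l f = wirtinger (hol l) f := by
  ext z
  simp [wd, wirtinger_apply, hol, ← Pi.single_smul]

theorem wdb_coe (f : smoothFunctions (Cn n)) : wdb l f = wirtinger (antihol l) f := by
  ext z
  simp [wdb, wirtinger_apply, antihol, ← Pi.single_smul]

theorem wd_slice (f : smoothFunctions (Cn n × Cn n)) (w : Cn n) :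
    wd l (fun z => (f : Cn n × Cn n → ℂ) (z, w)) =
      fun z => (wirtinger (dz l) f : Cn n × Cn n → ℂ) (z, w) := by
  ext z
  simp [wd, wirtinger_zDir_apply, hol, ← Pi.single_smul]

theorem wdb_slice (f : smoothFunctions (Cn n × Cn n)) (w : Cn n) :
    wdb l (fun z => (f : Cn n × Cn n → ℂ) (z, w)) =
      fun z => (wirtinger (dzbar l) f : Cn n × Cn n → ℂ) (z, w) := by
  ext z
  simp [wdb, wirtinger_zDir_apply, antihol, ← Pi.single_smul]

end Coordinates

section Model

open scoped ComplexConjugate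

variable {n : ℕ} (lam : Fin n → ℝ) (l : Fin n)

/-- The coordinate `z_l` of `(z, w)`. -/
def zCoord : smoothFunctions (Cn n × Cn n) :=
  ofFunctional ((ContinuousLinearMap.proj l).comp (.fst ℂ (Cn n) (Cn n)))

/-- The coordinate `w_l` of `(z, w)`. -/
def wCoord : smoothFunctions (Cn n × Cn n) :=
  ofFunctional ((ContinuousLinearMap.proj l).comp (.snd ℂ (Cn n) (Cn n)))

/-- The quadratic part `∑ λ_l |z_l|²` of `φ`. -/
def quadPhi : smoothFunctions (Cn n) :=
  ∑ l, (lam l : ℂ) • (star (ofFunctional (.proj l)) * ofFunctional (.proj l))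

/-- The quadratic part `i ∑ |λ_l| |z_l - w_l|² + i ∑ λ_l (z̄_l w_l - w̄_l z_l)` of `ψ`. -/
def quadPsi : smoothFunctions (Cn n × Cn n) :=
  I • ∑ l, ((|lam l| : ℝ) : ℂ) • (star (zCoord l - wCoord l) * (zCoord l - wCoord l)) +
    I • ∑ l, (lam l : ℂ) • (star (zCoord l) * wCoord l - star (wCoord l) * zCoord l)

theorem pullback_quadPhi :
    pullback (.fst ℝ _ _) (quadPhi lam) = ∑ l, (lam l : ℂ) • (star (zCoord l) * zCoord l) := by
  simp only [quadPhi, map_sum, map_smul, map_mul, map_star]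
  rfl

theorem pullback_quadPhi_add_quadPsi :
    pullback (.fst ℝ _ _) (quadPhi lam) + I • quadPsi lam =
      ∑ l, (star (zCoord l) * (((lam l - |lam l| : ℝ) : ℂ) • (zCoord l - wCoord l)) +
        star (wCoord l) *
          (((|lam l| : ℝ) : ℂ) • (zCoord l - wCoord l) + (lam l : ℂ) • zCoord l)) := by
  simp only [pullback_quadPhi, quadPsi, smul_add, smul_smul, I_mul_I, neg_one_smul,
    ← Finset.sum_neg_distrib, ← Finset.sum_add_distrib]
  refine Finset.sum_congr rfl fun l _ => ?_
  simp only [star_sub, Algebra.smul_def, map_sub, ofReal_sub]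
  ring

theorem pullback_quadPhi_sub_quadPsi :
    pullback (.fst ℝ _ _) (quadPhi lam) - I • quadPsi lam =
      ∑ l, (zCoord l * (((lam l + |lam l| : ℝ) : ℂ) • star (zCoord l - wCoord l)) +
        wCoord l *
          ((lam l : ℂ) • star (zCoord l) - ((|lam l| : ℝ) : ℂ) • star (zCoord l - wCoord l))) := by
  simp only [pullback_quadPhi, quadPsi, smul_add, smul_smul, I_mul_I, neg_one_smul,
    sub_add_eq_sub_sub, sub_neg_eq_add, ← Finset.sum_add_distrib]
  refine Finset.sum_congr rfl fun l _ => ?_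
  simp only [star_sub, Algebra.smul_def, map_add, ofReal_add]
  ring

variable (c : (Cn n × Cn n) × (Cn n × Cn n))

theorem wirtinger_zCoord : wirtinger c (zCoord l) = algebraMap ℂ _ (c.1.1 l) :=
  wirtinger_ofFunctional _ _

theorem wirtinger_wCoord : wirtinger c (wCoord l) = algebraMap ℂ _ (c.1.2 l) :=
  wirtinger_ofFunctional _ _

theorem wirtinger_star_zCoord :
    wirtinger c (star (zCoord l)) = algebraMap ℂ _ (conj (c.2.1 l)) :=
  wirtinger_star_ofFunctional _ _

theorem wirtinger_star_wCoord :
    wirtinger c (star (wCoord l)) = algebraMap ℂ _ (conj (c.2.2 l)) :=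
  wirtinger_star_ofFunctional _ _

theorem wirtinger_antihol_quad :
    wirtinger (dzbar l) (pullback (.fst ℝ _ _) (quadPhi lam) + I • quadPsi lam) =
      ((lam l - |lam l| : ℝ) : ℂ) • (zCoord l - wCoord l) := by
  rw [pullback_quadPhi_add_quadPsi, map_sum, Finset.sum_eq_single l]
  · simp [wirtinger_zCoord, wirtinger_wCoord, wirtinger_star_zCoord, wirtinger_star_wCoord, zDir,
      antihol]
  · intro m _ hml
    simp [wirtinger_zCoord, wirtinger_wCoord, wirtinger_star_zCoord, wirtinger_star_wCoord, zDir,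
      antihol, hml]
  · simp

theorem wirtinger_hol_quad :
    wirtinger (dz l) (pullback (.fst ℝ _ _) (quadPhi lam) - I • quadPsi lam) =
      ((lam l + |lam l| : ℝ) : ℂ) • star (zCoord l - wCoord l) := by
  rw [pullback_quadPhi_sub_quadPsi, map_sum, Finset.sum_eq_single l]
  · simp [wirtinger_zCoord, wirtinger_wCoord, wirtinger_star_zCoord, wirtinger_star_wCoord, zDir,
      hol]
  · intro m _ hml
    simp [wirtinger_zCoord, wirtinger_wCoord, wirtinger_star_zCoord, wirtinger_star_wCoord, zDir,
      hol, hml]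
  · simp

end Model

section Phase

open scoped ComplexConjugate Topology

variable {n : ℕ}

/-- The factor `φ(z) + i ψ(z, w)` of the eikonal equation. -/
def leftPart (Φ : smoothFunctions (Cn n)) (Ψ : smoothFunctions (Cn n × Cn n)) :
    smoothFunctions (Cn n × Cn n) := pullback (.fst ℝ _ _) Φ + I • Ψ

/-- The factor `φ(z) - i ψ(z, w)` of the eikonal equation. -/
def rightPart (Φ : smoothFunctions (Cn n)) (Ψ : smoothFunctions (Cn n × Cn n)) :
    smoothFunctions (Cn n × Cn n) := pullback (.fst ℝ _ _) Φ - I • Ψ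

/-- `HasWeights` for the two factors of the eikonal equation of `Φ` and `Ψ` at the origin. -/
abbrev HasPhaseWeights (Φ : smoothFunctions (Cn n)) (Ψ : smoothFunctions (Cn n × Cn n))
    (c : (Cn n × Cn n) × (Cn n × Cn n)) (p r : ℂ) : Prop :=
  HasWeights dz dzbar (rightPart Φ Ψ) (leftPart Φ Ψ) 0 c p r

/-- A weight `Φ` and a phase `Ψ` satisfying the eikonal equation at the origin to infinite order,
with quadratic parts prescribed by `lam`. -/
structure IsPhase (lam : Fin n → ℝ) (Φ : smoothFunctions (Cn n))
    (Ψ : smoothFunctions (Cn n × Cn n)) : Prop where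
  isLittleO_weight : ((Φ - quadPhi lam : smoothFunctions (Cn n)) : Cn n → ℂ) =o[𝓝 0]
    fun z => ‖z‖ ^ 2
  isLittleO_phase : ((Ψ - quadPsi lam : smoothFunctions (Cn n × Cn n)) : Cn n × Cn n → ℂ) =o[𝓝 0]
    fun p => ‖p‖ ^ 2
  star_weight : star Φ = Φ
  restrict_diag : pullback (diagMap _) Ψ = 0
  star_swap : star (pullback (swapMap _) Ψ) = -Ψ
  flat : eikonal dz dzbar (rightPart Φ Ψ) (leftPart Φ Ψ) ∈ flatAt 0

/-- The coefficient of `|∂³φ/∂z_t∂z̄_j∂z̄_k(0)|²` in the fourth derivative of the phase, for the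
eigenvalues `a = |λ_t|`, `x = |λ_j|` and `y = |λ_k|`. -/
def couplingCoeff (a x y : ℝ) : ℝ :=
  2 / (a + x + y) ^ 2 * (a + x + y - x * y / (x + a) - x * y / (y + a))

namespace IsPhase

variable {lam : Fin n → ℝ} {Φ : smoothFunctions (Cn n)} {Ψ : smoothFunctions (Cn n × Cn n)}
  (h : IsPhase lam Φ Ψ)

include h

theorem isLittleO_pullback :
    ((pullback (.fst ℝ _ _) (Φ - quadPhi lam) : smoothFunctions (Cn n × Cn n)) :
      Cn n × Cn n → ℂ) =o[𝓝 0] fun p => ‖p‖ ^ 2 :=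
  (h.isLittleO_weight.comp_tendsto (continuous_fst.tendsto' 0 0 rfl)).trans_isBigO
    (isBigO_of_le _ fun p => by simpa using pow_le_pow_left₀ (norm_nonneg _) (norm_fst_le p) 2)

theorem isLittleO_leftPart :
    ((leftPart Φ Ψ - leftPart (quadPhi lam) (quadPsi lam) : smoothFunctions (Cn n × Cn n)) :
      Cn n × Cn n → ℂ) =o[𝓝 0] fun p => ‖p‖ ^ 2 := by
  have hsub : leftPart Φ Ψ - leftPart (quadPhi lam) (quadPsi lam) =
      pullback (.fst ℝ _ _) (Φ - quadPhi lam) + I • (Ψ - quadPsi lam) := by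
    simp only [leftPart, map_sub]
    module
  rw [hsub]
  exact h.isLittleO_pullback.add (h.isLittleO_phase.const_smul_left I)

theorem isLittleO_rightPart :
    ((rightPart Φ Ψ - rightPart (quadPhi lam) (quadPsi lam) : smoothFunctions (Cn n × Cn n)) :
      Cn n × Cn n → ℂ) =o[𝓝 0] fun p => ‖p‖ ^ 2 := by
  have hsub : rightPart Φ Ψ - rightPart (quadPhi lam) (quadPsi lam) =
      pullback (.fst ℝ _ _) (Φ - quadPhi lam) - I • (Ψ - quadPsi lam) := by
    simp only [rightPart, map_sub]
    module
  rw [hsub]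
  exact h.isLittleO_pullback.sub (h.isLittleO_phase.const_smul_left I)

theorem evalAt_antihol_leftPart (l : Fin n) :
    evalAt 0 (wirtinger (dzbar l) (leftPart Φ Ψ)) = 0 := by
  have hrem := evalAt_wirtinger_eq_zero h.isLittleO_leftPart (dzbar l)
  rw [map_sub, map_sub, sub_eq_zero] at hrem
  rw [hrem, leftPart, wirtinger_antihol_quad]
  simp [zCoord, wCoord, ofFunctional]

theorem evalAt_hol_rightPart (l : Fin n) :
    evalAt 0 (wirtinger (dz l) (rightPart Φ Ψ)) = 0 := by
  have hrem := evalAt_wirtinger_eq_zero h.isLittleO_rightPart (dz l)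
  rw [map_sub, map_sub, sub_eq_zero] at hrem
  rw [hrem, rightPart, wirtinger_hol_quad]
  simp [zCoord, wCoord, ofFunctional]

theorem hessian_leftPart (c : (Cn n × Cn n) × (Cn n × Cn n)) (l : Fin n) :
    evalAt 0 (wirtinger c (wirtinger (dzbar l) (leftPart Φ Ψ))) =
      ((lam l - |lam l| : ℝ) : ℂ) * (c.1.1 l - c.1.2 l) := by
  have hrem := evalAt_wirtinger_wirtinger_eq_zero h.isLittleO_leftPart c (dzbar l)
  rw [map_sub, map_sub, map_sub, sub_eq_zero] at hrem
  rw [hrem, leftPart, wirtinger_antihol_quad]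
  simp only [Derivation.map_smul, map_sub, wirtinger_zCoord, wirtinger_wCoord, map_smul,
    AlgHom.commutes, Algebra.algebraMap_self, RingHom.id_apply, smul_eq_mul]

theorem hessian_rightPart (c : (Cn n × Cn n) × (Cn n × Cn n)) (l : Fin n) :
    evalAt 0 (wirtinger c (wirtinger (dz l) (rightPart Φ Ψ))) =
      ((lam l + |lam l| : ℝ) : ℂ) * conj (c.2.1 l - c.2.2 l) := by
  have hrem := evalAt_wirtinger_wirtinger_eq_zero h.isLittleO_rightPart c (dz l)
  rw [map_sub, map_sub, map_sub, sub_eq_zero] at hrem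
  rw [hrem, rightPart, wirtinger_hol_quad]
  simp only [Derivation.map_smul, star_sub, map_sub, wirtinger_star_zCoord, wirtinger_star_wCoord,
    map_smul, AlgHom.commutes, Algebra.algebraMap_self, RingHom.id_apply, smul_eq_mul]

theorem isEikonalPair :
    IsEikonalPair dz dzbar (pullback (.fst ℝ _ _) Φ) (rightPart Φ Ψ) (leftPart Φ Ψ) 0 where
  add_eq := by
    simp only [rightPart, leftPart]
    module
  critical_left := h.evalAt_antihol_leftPart
  critical_right := h.evalAt_hol_rightPart
  flat := h.flat

theorem hasWeights_dz (m : Fin n) :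
    HasPhaseWeights Φ Ψ (dz m) ((lam m - |lam m| : ℝ) : ℂ) 0 where
  left g := by
    simp only [h.hessian_leftPart]
    simp [zDir, hol, Pi.single_apply]
  right g := by
    simp only [h.hessian_rightPart]
    simp [zDir, hol]

theorem hasWeights_dzbar (m : Fin n) :
    HasPhaseWeights Φ Ψ (dzbar m) 0 ((lam m + |lam m| : ℝ) : ℂ) where
  left g := by
    simp only [h.hessian_leftPart]
    simp [zDir, antihol]
  right g := by
    simp only [h.hessian_rightPart]
    simp [zDir, antihol, Pi.single_apply, apply_ite, mul_comm]

theorem hasWeights_diagDir (c : Cn n × Cn n) :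
    HasPhaseWeights Φ Ψ (diagDir c) 0 0 where
  left g := by simp [h.hessian_leftPart, diagDir]
  right g := by simp [h.hessian_rightPart, diagDir]

theorem star_leftPart :
    star (leftPart Φ Ψ) = pullback (.fst ℝ _ _) Φ + I • pullback (swapMap _) Ψ := by
  have hswap : star Ψ = -pullback (swapMap _) Ψ := by
    rw [← star_star (pullback (swapMap _) Ψ), h.star_swap, star_neg, neg_neg]
  simp [leftPart, ← map_star, h.star_weight, hswap]

theorem conj_evalAt_zDir_leftPart (a b c : Cn n × Cn n) :
    conj (evalAt 0 (wirtinger (zDir a) (wirtinger (zDir b) (wirtinger (zDir c)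
        (leftPart Φ Ψ))))) =
      evalAt 0 (wirtinger a.swap (wirtinger b.swap (wirtinger c.swap Φ))) +
      evalAt 0 (wirtinger (wDir a.swap) (wirtinger (wDir b.swap) (wirtinger (wDir c.swap)
        (leftPart Φ Ψ)))) := by
  have hswap (e : Cn n × Cn n) : (zDir e).swap = zDir e.swap := rfl
  rw [← evalAt_star, star_wirtinger, star_wirtinger, star_wirtinger, h.star_leftPart]
  simp only [leftPart, map_add, Derivation.map_smul, hswap, wirtinger_zDir_pullback_fst,
    wirtinger_zDir_pullback_swapMap, wirtinger_wDir_pullback_fst, map_smul, evalAt_zero_pullback,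
    zero_add]

theorem evalAt_diagDir_leftPart (a b c : Cn n × Cn n) :
    evalAt 0 (wirtinger (diagDir a) (wirtinger (diagDir b) (wirtinger (diagDir c)
        (leftPart Φ Ψ)))) = evalAt 0 (wirtinger a (wirtinger b (wirtinger c Φ))) := by
  have hdiag : pullback (diagMap _) (leftPart Φ Ψ) = Φ := by
    rw [leftPart, map_add, map_smul, h.restrict_diag, smul_zero, add_zero]
    rfl
  rw [← evalAt_zero_pullback (diagMap _), ← wirtinger_pullback_diagMap,
    ← wirtinger_pullback_diagMap, ← wirtinger_pullback_diagMap, hdiag]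

theorem hasWeights_dz_of_neg {m : Fin n} (hm : lam m < 0) :
    HasPhaseWeights Φ Ψ (dz m) (-2 * (|lam m| : ℝ)) 0 := by
  convert h.hasWeights_dz m using 1
  rw [abs_of_neg hm]
  push_cast
  ring

theorem hasWeights_dz_of_pos {m : Fin n} (hm : 0 < lam m) :
    HasPhaseWeights Φ Ψ (dz m) 0 0 := by
  simpa only [abs_of_pos hm, sub_self, ofReal_zero] using h.hasWeights_dz m

theorem hasWeights_dzbar_of_pos {m : Fin n} (hm : 0 < lam m) :
    HasPhaseWeights Φ Ψ (dzbar m) 0 (2 * (|lam m| : ℝ)) := by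
  convert h.hasWeights_dzbar m using 1
  rw [abs_of_pos hm]
  push_cast
  ring

theorem evalAt_leftPart_three_of_weights {a b c : (Cn n × Cn n) × (Cn n × Cn n)}
    {pa pb pc ra rb rc : ℂ} (ha : HasPhaseWeights Φ Ψ a pa ra)
    (hb : HasPhaseWeights Φ Ψ b pb rb)
    (hc : HasPhaseWeights Φ Ψ c pc rc) {p r : ℝ}
    (hp : pa + pb + pc = -2 * p) (hr : ra + rb + rc = 2 * r) (hpr : p + r ≠ 0) :
    evalAt 0 (wirtinger a (wirtinger b (wirtinger c (leftPart Φ Ψ)))) = (2 * p / (p + r) : ℝ) *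
      evalAt 0 (wirtinger a (wirtinger b (wirtinger c (pullback (.fst ℝ _ _) Φ)))) := by
  have heq := h.isEikonalPair.left_three_eq ha hb hc
  have hpr' : (p + r : ℂ) ≠ 0 := by exact_mod_cast hpr
  rw [hp, hr] at heq
  push_cast
  field_simp
  linear_combination -heq / 2

theorem evalAt_rightPart_three_of_weights {a b c : (Cn n × Cn n) × (Cn n × Cn n)}
    {pa pb pc ra rb rc : ℂ} (ha : HasPhaseWeights Φ Ψ a pa ra)
    (hb : HasPhaseWeights Φ Ψ b pb rb)
    (hc : HasPhaseWeights Φ Ψ c pc rc) {p r : ℝ}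
    (hp : pa + pb + pc = -2 * p) (hr : ra + rb + rc = 2 * r) (hpr : p + r ≠ 0) :
    evalAt 0 (wirtinger a (wirtinger b (wirtinger c (rightPart Φ Ψ)))) = (2 * r / (p + r) : ℝ) *
      evalAt 0 (wirtinger a (wirtinger b (wirtinger c (pullback (.fst ℝ _ _) Φ)))) := by
  have heq := h.isEikonalPair.right_three_eq ha hb hc
  have hpr' : (p + r : ℂ) ≠ 0 := by exact_mod_cast hpr
  rw [hp, hr] at heq
  push_cast
  field_simp
  linear_combination heq / 2

section ThirdOrder

variable {t j k : Fin n} (ht : lam t < 0) (hj : 0 < lam j) (hk : 0 < lam k)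

include ht hj hk

theorem evalAt_dzbar_dzbar_dz_rightPart :
    evalAt 0 (wirtinger (dzbar j) (wirtinger (dzbar k) (wirtinger (dz t) (rightPart Φ Ψ)))) =
      (2 * (|lam j| + |lam k|) / (|lam t| + (|lam j| + |lam k|)) : ℝ) *
        evalAt 0 (wirtinger (hol t) (wirtinger (antihol j) (wirtinger (antihol k) Φ))) := by
  rw [wirtinger_comm (dzbar k), wirtinger_comm (dzbar j), h.evalAt_rightPart_three_of_weights
    (h.hasWeights_dz_of_neg ht) (h.hasWeights_dzbar_of_pos hj) (h.hasWeights_dzbar_of_pos hk)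
    (p := |lam t|) (r := |lam j| + |lam k|) (by simp) (by push_cast; ring) (by positivity)]
  simp only [wirtinger_zDir_pullback_fst, evalAt_zero_pullback]

theorem evalAt_wDir_three_leftPart :
    evalAt 0 (wirtinger (wDir (hol t)) (wirtinger (wDir (antihol j)) (wirtinger (wDir (antihol k))
        (leftPart Φ Ψ)))) =
      (2 * |lam t| / (|lam t| + |lam j|) + 2 * |lam t| / (|lam t| + |lam k|) -
          2 * |lam t| / (|lam t| + (|lam j| + |lam k|)) - 1 : ℝ) *
        evalAt 0 (wirtinger (hol t) (wirtinger (antihol j) (wirtinger (antihol k) Φ))) := by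
  have hDDD := h.evalAt_diagDir_leftPart (hol t) (antihol j) (antihol k)
  have hzt := h.hasWeights_dz_of_neg ht
  have hzj := h.hasWeights_dzbar_of_pos hj
  have hzk := h.hasWeights_dzbar_of_pos hk
  have hD := h.hasWeights_diagDir
  have ht' : |lam t| ≠ 0 := abs_ne_zero.2 ht.ne
  have hzDD := h.evalAt_leftPart_three_of_weights hzt (hD (antihol j)) (hD (antihol k))
    (p := |lam t|) (r := 0) (by simp) (by simp) (by rwa [add_zero])
  have hDzD := h.evalAt_leftPart_three_of_weights (hD (hol t)) hzj (hD (antihol k))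
    (p := 0) (r := |lam j|) (by simp) (by simp) (by positivity)
  have hDDz := h.evalAt_leftPart_three_of_weights (hD (hol t)) (hD (antihol j)) hzk
    (p := 0) (r := |lam k|) (by simp) (by simp) (by positivity)
  have hDzz := h.evalAt_leftPart_three_of_weights (hD (hol t)) hzj hzk
    (p := 0) (r := |lam j| + |lam k|) (by simp) (by push_cast; ring) (by positivity)
  have hzDz := h.evalAt_leftPart_three_of_weights hzt (hD (antihol j)) hzk
    (p := |lam t|) (r := |lam k|) (by simp) (by simp) (by positivity)
  have hzzD := h.evalAt_leftPart_three_of_weights hzt hzj (hD (antihol k))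
    (p := |lam t|) (r := |lam j|) (by simp) (by simp) (by positivity)
  have hzzz := h.evalAt_leftPart_three_of_weights hzt hzj hzk
    (p := |lam t|) (r := |lam j| + |lam k|) (by simp) (by push_cast; ring) (by positivity)
  simp only [wirtinger_wDir, Derivation.sub_apply, map_sub, hDDD, hzDD, hDzD, hDDz, hDzz, hzDz,
    hzzD, hzzz, wirtinger_zDir_pullback_fst, wirtinger_diagDir_pullback_fst, evalAt_zero_pullback,
    add_zero, mul_div_cancel_right₀ _ ht', mul_zero, zero_div]
  push_cast
  ring

theorem evalAt_dz_dz_dzbar_leftPart :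
    evalAt 0 (wirtinger (dz j) (wirtinger (dz k) (wirtinger (dzbar t) (leftPart Φ Ψ)))) =
      ((|lam t| + (|lam j| + |lam k|)) * couplingCoeff |lam t| |lam j| |lam k| : ℝ) *
        conj (evalAt 0 (wirtinger (hol t) (wirtinger (antihol j) (wirtinger (antihol k) Φ)))) := by
  have hconj := h.conj_evalAt_zDir_leftPart (antihol t) (hol j) (hol k)
  have hcoeff : 1 + (2 * |lam t| / (|lam t| + |lam j|) + 2 * |lam t| / (|lam t| + |lam k|) -
      2 * |lam t| / (|lam t| + (|lam j| + |lam k|)) - 1) =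
        (|lam t| + (|lam j| + |lam k|)) * couplingCoeff |lam t| |lam j| |lam k| := by
    rw [couplingCoeff]
    field_simp
    ring
  rw [wirtinger_comm (dz k), wirtinger_comm (dz j), ← conj_conj (evalAt 0 _), hconj,
    ← hcoeff]
  change conj (evalAt 0 (wirtinger (hol t) (wirtinger (antihol j) (wirtinger (antihol k) Φ))) +
    evalAt 0 (wirtinger (wDir (hol t)) (wirtinger (wDir (antihol j)) (wirtinger (wDir (antihol k))
      _)))) = _
  rw [h.evalAt_wDir_three_leftPart ht hj hk, map_add, map_mul, conj_ofReal, ofReal_add, add_mul,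
    ofReal_one, one_mul]

end ThirdOrder

theorem jetPairing_eq_zero {a b c e : (Cn n × Cn n) × (Cn n × Cn n)} {ra rb : ℂ}
    (ha : HasPhaseWeights Φ Ψ a 0 ra)
    (hb : HasPhaseWeights Φ Ψ b 0 rb)
    (hr : 0 < (ra + rb).re) :
    jetPairing dz dzbar (rightPart Φ Ψ) (leftPart Φ Ψ) 0 a b c e = 0 := by
  refine Finset.sum_eq_zero fun l _ => mul_eq_zero_of_left ?_ _
  have heq := h.isEikonalPair.left_three_eq ha hb (h.hasWeights_dzbar l)
  have hne : ra + rb + ((lam l + |lam l| : ℝ) : ℂ) ≠ 0 := by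
    refine ne_of_apply_ne re (ne_of_gt ?_)
    rw [add_re, ofReal_re, zero_re]
    linarith [neg_abs_le (lam l)]
  refine mul_left_cancel₀ hne ?_
  linear_combination -heq

variable (hlam : ∀ l, lam l ≠ 0) {j k : Fin n} (hj : 0 < lam j) (hk : 0 < lam k)

include hlam hj hk

theorem jetPairing_dz_dz_dzbar_dzbar :
    jetPairing dz dzbar (rightPart Φ Ψ) (leftPart Φ Ψ) 0 (dz j) (dz k) (dzbar j) (dzbar k) =
      2 * (|lam j| + |lam k|) * ∑ t, if lam t < 0 then
        couplingCoeff |lam t| |lam j| |lam k| * (normSq (evalAt 0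
          (wirtinger (hol t) (wirtinger (antihol j) (wirtinger (antihol k) Φ)))) : ℂ)
      else 0 := by
  rw [jetPairing, Finset.mul_sum]
  refine Finset.sum_congr rfl fun t _ => ?_
  split_ifs with ht
  · have hne : (|lam t| + (|lam j| + |lam k|) : ℂ) ≠ 0 := by
      exact_mod_cast (by positivity : |lam t| + (|lam j| + |lam k|) ≠ 0)
    rw [h.evalAt_dz_dz_dzbar_leftPart ht hj hk, h.evalAt_dzbar_dzbar_dz_rightPart ht hj hk,
      ← mul_conj]
    push_cast
    field_simp
  · have ht' : 0 < lam t := (hlam t).lt_or_gt.resolve_left ht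
    have heq := h.isEikonalPair.left_three_eq (h.hasWeights_dz_of_pos hj)
      (h.hasWeights_dz_of_pos hk) (h.hasWeights_dzbar_of_pos ht')
    have hV : evalAt 0 (wirtinger (dz j) (wirtinger (dz k) (wirtinger (dzbar t)
        (leftPart Φ Ψ)))) = 0 := by simpa [hlam t] using heq
    rw [hV, zero_mul, mul_zero]

theorem evalAt_dzbar_dz_dzbar_dz :
    evalAt 0 (wirtinger (dzbar j) (wirtinger (dz j) (wirtinger (dzbar k) (wirtinger (dz k) Ψ)))) =
      I * (∑ t, if lam t < 0 then
        couplingCoeff |lam t| |lam j| |lam k| * (normSq (evalAt 0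
          (wirtinger (hol t) (wirtinger (antihol j) (wirtinger (antihol k) Φ)))) : ℂ)
      else 0) +
      I * evalAt 0 (wirtinger (antihol j) (wirtinger (hol j) (wirtinger (antihol k)
        (wirtinger (hol k) Φ)))) := by
  have hzj := h.hasWeights_dz_of_pos hj
  have hzk := h.hasWeights_dz_of_pos hk
  have hbj := h.hasWeights_dzbar_of_pos hj
  have hbk := h.hasWeights_dzbar_of_pos hk
  have hfour := h.isEikonalPair.four_eq hbj hzj hbk hzk
  rw [h.jetPairing_eq_zero hbj hzj (by simpa using hj.ne'),
    h.jetPairing_eq_zero hbk hzk (by simpa using hk.ne'),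
    h.jetPairing_eq_zero hbj hbk (by
      simp only [add_re, mul_re, re_ofNat, ofReal_re, im_ofNat, ofReal_im, mul_zero, sub_zero]
      positivity),
    h.jetPairing_eq_zero hbj hzk (by simpa using hj.ne'),
    h.jetPairing_eq_zero hzj hbk (by simpa using hk.ne'),
    h.jetPairing_dz_dz_dzbar_dzbar hlam hj hk, leftPart] at hfour
  simp only [map_add, Derivation.map_smul, wirtinger_zDir_pullback_fst, evalAt_zero_pullback,
    map_smul, smul_eq_mul] at hfour
  have hne : (|lam j| + |lam k| : ℂ) ≠ 0 := by
    exact_mod_cast (by positivity : |lam j| + |lam k| ≠ 0)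
  generalize evalAt 0 (wirtinger (dzbar j) (wirtinger (dz j) (wirtinger (dzbar k) (wirtinger (dz k)
    Ψ)))) = ψ₄ at *
  refine mul_left_cancel₀ hne ?_
  linear_combination (-I / 2) * hfour + (|lam j| + |lam k| : ℂ) * ψ₄ * I_mul_I

end IsPhase

end Phase

section FourthDerivative

open scoped ContDiff Topology ComplexConjugate

variable {n : ℕ}

theorem isLittleO_sq_of_isBigO_cube {E F : Type*} [NormedAddCommGroup E] [NormedAddCommGroup F]
    {f : E → F} (h : f =O[𝓝 0] fun x => ‖x‖ ^ 3) : f =o[𝓝 0] fun x => ‖x‖ ^ 2 :=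
  h.trans_isLittleO (isLittleO_norm_pow_norm_pow (by norm_num))

theorem eikonal_rightPart_leftPart (Φ : smoothFunctions (Cn n))
    (Ψ : smoothFunctions (Cn n × Cn n)) :
    (eikonal dz dzbar (rightPart Φ Ψ) (leftPart Φ Ψ) : Cn n × Cn n → ℂ) = fun p =>
      ∑ j, (I * wdb j (fun x => (Ψ : Cn n × Cn n → ℂ) (x, p.2)) p.1 + wdb j Φ p.1) *
        (-I * wd j (fun x => (Ψ : Cn n × Cn n → ℂ) (x, p.2)) p.1 + wd j Φ p.1) := by
  have hpull (f : smoothFunctions (Cn n)) (p : Cn n × Cn n) :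
      (pullback (.fst ℝ (Cn n) (Cn n)) f : Cn n × Cn n → ℂ) p = (f : Cn n → ℂ) p.1 := rfl
  ext p
  simp only [wd_slice, wdb_slice, wd_coe, wdb_coe, ← hpull, ← wirtinger_zDir_pullback_fst,
    eikonal, leftPart, rightPart, map_add, map_sub, Derivation.map_smul]
  simp [add_comm, sub_eq_add_neg]

theorem isPhase_of_contDiff {lam : Fin n → ℝ} {φ : Cn n → ℝ} (hφ : PhiOK lam φ)
    {ψ : Cn n → Cn n → ℂ} (hψ : ContDiff ℝ ∞ fun p : Cn n × Cn n => ψ p.1 p.2)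
    (hdiag : ∀ z, ψ z z = 0) (hskew : ∀ z w, ψ z w = -conj (ψ w z))
    (hflat : ∀ m : ℕ, iteratedFDeriv ℝ m
      (fun p : Cn n × Cn n =>
        ∑ j, (I * wdb j (fun x => ψ x p.2) p.1 + wdb j (cplx φ) p.1) *
             (-I * wd j (fun x => ψ x p.2) p.1 + wd j (cplx φ) p.1)) (0, 0) = 0)
    (hquad : (fun p : Cn n × Cn n =>
      ψ p.1 p.2 -
        (I * ∑ j, ((|lam j| * normSq (p.1 j - p.2 j) : ℝ) : ℂ)
          + I * ∑ j, ((lam j : ℝ) : ℂ) * (conj (p.1 j) * p.2 j - conj (p.2 j) * p.1 j)))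
      =O[𝓝 0] fun p => ‖p‖ ^ 3) :
    IsPhase lam ⟨cplx φ, mem_smoothFunctions.2 (ofRealCLM.contDiff.comp hφ.1)⟩
      ⟨fun p => ψ p.1 p.2, mem_smoothFunctions.2 hψ⟩ where
  isLittleO_weight := by
    refine isLittleO_sq_of_isBigO_cube (hφ.2.norm_left.congr_left fun z => ?_).of_norm_left
    rw [← Complex.norm_real]
    congr 1
    simp [cplx, quadPhi, ofFunctional, normSq_eq_conj_mul_self]
  isLittleO_phase := by
    refine (isLittleO_sq_of_isBigO_cube hquad).congr_left fun p => ?_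
    simp [quadPsi, zCoord, wCoord, ofFunctional, normSq_eq_conj_mul_self]
  star_weight := by
    ext z
    exact conj_ofReal _
  restrict_diag := by
    ext z
    exact hdiag z
  star_swap := by
    ext p
    exact (neg_eq_iff_eq_neg.2 (hskew p.1 p.2)).symm
  flat := by
    rw [mem_flatAt, eikonal_rightPart_leftPart]
    exact hflat

theorem statement8_general (lam : Fin n → ℝ) (hlam : ∀ l, lam l ≠ 0)
    (φ : Cn n → ℝ) (hφ : PhiOK lam φ) (ψ : Cn n → Cn n → ℂ)
    (hψ : ContDiff ℝ ∞ fun p : Cn n × Cn n => ψ p.1 p.2)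
    (hdiag : ∀ z, ψ z z = 0) (hskew : ∀ z w, ψ z w = -conj (ψ w z))
    (hflat : ∀ m : ℕ, iteratedFDeriv ℝ m
      (fun p : Cn n × Cn n =>
        ∑ j, (I * wdb j (fun x => ψ x p.2) p.1 + wdb j (cplx φ) p.1) *
             (-I * wd j (fun x => ψ x p.2) p.1 + wd j (cplx φ) p.1)) (0, 0) = 0)
    (hquad : (fun p : Cn n × Cn n =>
      ψ p.1 p.2 -
        (I * ∑ j, ((|lam j| * normSq (p.1 j - p.2 j) : ℝ) : ℂ)
          + I * ∑ j, ((lam j : ℝ) : ℂ) * (conj (p.1 j) * p.2 j - conj (p.2 j) * p.1 j)))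
      =O[𝓝 0] fun p => ‖p‖ ^ 3)
    {j k : Fin n} (hj : 0 < lam j) (hk : 0 < lam k) :
    wdb j (wd j (wdb k (wd k (fun z => ψ z 0)))) 0 =
      (∑ t : Fin n, if lam t < 0 then
        ((2 / (|lam t| + |lam j| + |lam k|) ^ 2 *
            (|lam t| + |lam j| + |lam k|
              - |lam j| * |lam k| / (|lam j| + |lam t|)
              - |lam j| * |lam k| / (|lam k| + |lam t|)) : ℝ) : ℂ) * I *
          (normSq (wd t (wdb j (wdb k (cplx φ))) 0) : ℂ)
      else 0)
      + I * wdb j (wd j (wdb k (wd k (cplx φ)))) 0 := by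
  have hfour := (isPhase_of_contDiff hφ hψ hdiag hskew hflat hquad).evalAt_dzbar_dz_dzbar_dz
    hlam hj hk
  simp only [evalAt_apply, ← Prod.mk_zero_zero, ← wd_coe, ← wdb_coe] at hfour
  let Ψ : smoothFunctions (Cn n × Cn n) := ⟨fun p => ψ p.1 p.2, mem_smoothFunctions.2 hψ⟩
  change wdb j (wd j (wdb k (wd k fun z => (Ψ : Cn n × Cn n → ℂ) (z, 0)))) 0 = _
  rw [wd_slice, wdb_slice, wd_slice, wdb_slice]
  refine hfour.trans ?_
  rw [Finset.mul_sum]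
  congr 1
  refine Finset.sum_congr rfl fun t _ => ?_
  rw [mul_ite, mul_zero, ← mul_assoc, mul_comm I, couplingCoeff]

end FourthDerivative

/-- the mixed fourth derivative `∂⁴ψ/∂z̄_j∂z_j∂z̄_k∂z_k(0,0)`
(derivatives in the `z`-variables, `w` held fixed at `0`) for `q+1 ≤ j,k ≤ n`. -/
theorem statement8 (n q : ℕ) (hn : 1 ≤ n) (hq : q ≤ n) (lam : Fin n → ℝ)
    (hneg : ∀ j : Fin n, (j : ℕ) < q → lam j < 0)
    (hpos : ∀ j : Fin n, q ≤ (j : ℕ) → 0 < lam j)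
    (φ : Cn n → ℝ) (hφ : PhiOK lam φ)
    (ψ : Cn n → Cn n → ℂ) (hψ : Admissible lam φ ψ)
    (j k : Fin n) (hj : q ≤ (j : ℕ)) (hk : q ≤ (k : ℕ)) :
    wdb j (wd j (wdb k (wd k (fun z => ψ z 0)))) 0 =
      (∑ t : Fin n, if (t : ℕ) < q then
        ((2 / (|lam t| + |lam j| + |lam k|) ^ 2 *
            (|lam t| + |lam j| + |lam k|
              - |lam j| * |lam k| / (|lam j| + |lam t|)
              - |lam j| * |lam k| / (|lam k| + |lam t|)) : ℝ) : ℂ) * Complex.I *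
          (Complex.normSq (wd t (wdb j (wdb k (cplx φ))) 0) : ℂ)
      else 0)
      + Complex.I * wdb j (wd j (wdb k (wd k (cplx φ)))) 0 := by
  obtain ⟨hsmooth, hdiag, hskew, -, -, -, -, -, hflat, hquad⟩ := hψ
  have hsign (t : Fin n) : (t : ℕ) < q ↔ lam t < 0 :=
    ⟨hneg t, fun ht => not_le.1 fun h => (hpos t h).not_gt ht⟩
  have hlam (t : Fin n) : lam t ≠ 0 :=
    (lt_or_ge (t : ℕ) q).elim (fun h => (hneg t h).ne) fun h => (hpos t h).ne'
  simpa only [hsign] using statement8_general lam hlam φ hφ ψ hsmooth hdiag hskew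
    (fun m => hflat m 0) hquad (hpos j hj) (hpos k hk)
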